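/- Suppose every 5-edge-connected graph admits a mod 3-orientation. Then every 5-edge-connected graph G with a vertex x of degree 5 has the property that every pre-orientation D_0 of the edges incident with x satisfying d^+_{D_0}(x) ≡ d^-_{D_0}(x) (mod 3) extends to a mod 3-orientation of G. -/

import Mathlib

open Finset

/-- A finite multigraph without loops: each edge `e` has two distinct
endpoints `fst e` and `snd e`.  An orientation is a map `D : E → Bool`,
where `D e = true` means `e` is directed from `fst e` to `snd e`. -/
structure Multigraph (V : Type) (E : Type) where
  fst : E → V
  snd : E → V
  no_loop : ∀ e, fst e ≠ snd e

namespace Multigraph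

variable {V E : Type} [Fintype V] [DecidableEq V] [Fintype E] [DecidableEq E]

/-- The tail (initial vertex) of edge `e` under orientation `D`. -/
def tail (G : Multigraph V E) (D : E → Bool) (e : E) : V :=
  if D e then G.fst e else G.snd e

/-- The head (terminal vertex) of edge `e` under orientation `D`. -/
def head (G : Multigraph V E) (D : E → Bool) (e : E) : V :=
  if D e then G.snd e else G.fst e

/-- Outdegree `d⁺_D(v)` (as an integer, for convenience). -/
def outDeg (G : Multigraph V E) (D : E → Bool) (v : V) : ℤ :=
  ((univ.filter fun e => G.tail D e = v).card : ℤ)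

/-- Indegree `d⁻_D(v)`. -/
def inDeg (G : Multigraph V E) (D : E → Bool) (v : V) : ℤ :=
  ((univ.filter fun e => G.head D e = v).card : ℤ)

/-- `e` is incident with `v`. -/
def Incident (G : Multigraph V E) (v : V) (e : E) : Prop :=
  G.fst e = v ∨ G.snd e = v

instance (G : Multigraph V E) (v : V) : DecidablePred (G.Incident v) := fun e =>
  inferInstanceAs (Decidable (G.fst e = v ∨ G.snd e = v))

/-- The degree of a vertex. -/
def degree (G : Multigraph V E) (v : V) : ℕ :=
  (univ.filter fun e => G.Incident v e).card

/-- The edge-cut `∂_G(A)`: edges with exactly one endpoint in `A`. -/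
def cut (G : Multigraph V E) (A : Finset V) : Finset E :=
  univ.filter fun e => ¬ ((G.fst e ∈ A) ↔ (G.snd e ∈ A))

/-- `G` is `k`-edge-connected: every edge-cut has at least `k` edges. -/
def EdgeConnected (G : Multigraph V E) (k : ℕ) : Prop :=
  ∀ A : Finset V, A.Nonempty → A ≠ univ → k ≤ (G.cut A).card

/-- A boundary function: values in `ℤ₃` summing to `0`. -/
def IsBoundary (β : V → ZMod 3) : Prop := ∑ v, β v = 0

/-- `D` is a `β`-orientation: `d⁺(v) - d⁻(v) ≡ β v (mod 3)` at every vertex. -/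
def IsBetaOrientation (G : Multigraph V E) (β : V → ZMod 3) (D : E → Bool) : Prop :=
  ∀ v : V, ((G.outDeg D v - G.inDeg D v : ℤ) : ZMod 3) = β v

/-- A mod 3-orientation: `d⁺(v) ≡ d⁻(v) (mod 3)` at every vertex. -/
def IsMod3Orientation (G : Multigraph V E) (D : E → Bool) : Prop :=
  ∀ v : V, ((G.outDeg D v - G.inDeg D v : ℤ) : ZMod 3) = 0

/-- `G` admits a mod 3-orientation (equivalently, a nowhere-zero 3-flow). -/
def Mod3Orientable (G : Multigraph V E) : Prop := ∃ D, G.IsMod3Orientation D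

/-- `G` is `ℤ₃`-connected. -/
def Z3Connected (G : Multigraph V E) : Prop :=
  ∀ β : V → ZMod 3, IsBoundary β → ∃ D, G.IsBetaOrientation β D

/-- `G` is `ℤ₃`-extendable at `x`: every pre-orientation of the edges at `x`
compatible with `β x` extends to a `β`-orientation of `G`. -/
def Z3ExtendableAt (G : Multigraph V E) (x : V) : Prop :=
  ∀ β : V → ZMod 3, IsBoundary β →
    ∀ D₀ : E → Bool, ((G.outDeg D₀ x - G.inDeg D₀ x : ℤ) : ZMod 3) = β x →
      ∃ D : E → Bool, (∀ e, G.Incident x e → D e = D₀ e) ∧ G.IsBetaOrientation β D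

/-- `G` is mod-3-extendable at `x`: every pre-orientation of `∂(x)` with
`d⁺(x) ≡ d⁻(x) (mod 3)` extends to a mod 3-orientation of `G`. -/
def Mod3ExtendableAt (G : Multigraph V E) (x : V) : Prop :=
  ∀ D₀ : E → Bool, ((G.outDeg D₀ x - G.inDeg D₀ x : ℤ) : ZMod 3) = 0 →
    ∃ D : E → Bool, (∀ e, G.Incident x e → D e = D₀ e) ∧ G.IsMod3Orientation D

/-- `A` is a `k`-critical-set: `d(A) ≤ k` but every nonempty proper subset has
larger boundary. -/
def CriticalSet (G : Multigraph V E) (k : ℕ) (A : Finset V) : Prop :=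
  A.Nonempty ∧ A ≠ univ ∧ (G.cut A).card ≤ k ∧
    ∀ B : Finset V, B.Nonempty → B ⊂ A → k < (G.cut B).card

/-- The set of edge-cuts of size exactly `k` (as sets of edges). -/
def kCuts (G : Multigraph V E) (k : ℕ) : Finset (Finset E) :=
  ((univ : Finset (Finset V)).filter
    fun A => A.Nonempty ∧ A ≠ univ ∧ (G.cut A).card = k).image G.cut


end Multigraph

/-!
Take `K₆` and replace five of its vertices by copies of `G - x`, wiring the five edges of `K₆` at
each of them to the five edges of `G` at `x`; replacing the sixth vertex as well does no harm. By
uncrossing, the result is 5-edge-connected, so it has a mod 3-orientation. Contracting everything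
but one copy turns this into a mod 3-orientation of `G`, and contracting all the copies turns it
into one of `K₆`.

In a mod 3-orientation, a vertex of degree 5 has net outdegree `±3`, so exactly one of its edges,
the minority edge, disagrees with the other four. Up to reversal, such an orientation is determined
at `x` by the minority edge, so it suffices to find a copy where that edge is the minority edge of
`D₀`. In every copy, wire the latter to the spoke of `K₆` joining the copy to the vertex `0`. If no
spoke were the minority edge at its end `j ≠ 0`, the net outdegree at `j` would be three times the
sign of its spoke there, while the net outdegree at `0` is minus the sum of these five signs. As the
net outdegrees sum to zero, so would the five signs, which is absurd.
-/

section SignedSums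

variable {α : Type*} {s : Finset α} {f : α → ℤ}

lemma mul_sum_eq_two_mul_card_filter_sub_card (hf : ∀ a ∈ s, f a = 1 ∨ f a = -1)
    {a : α} (ha : a ∈ s) : f a * ∑ b ∈ s, f b = 2 * #{b ∈ s | f b = f a} - #s := by
  have hprod : ∀ b ∈ s, f a * f b = 2 * (if f b = f a then 1 else 0) - 1 := fun b hb => by
    rcases hf a ha with h | h <;> rcases hf b hb with h' | h' <;> simp [h, h']
  rw [mul_sum, sum_congr rfl hprod, sum_sub_distrib, ← mul_sum, sum_boole]
  simp

lemma sum_ne_zero_of_odd_card (hf : ∀ a ∈ s, f a = 1 ∨ f a = -1) (hs : Odd #s) :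
    ∑ a ∈ s, f a ≠ 0 := by
  obtain ⟨a, ha⟩ := card_pos.1 hs.pos
  intro hsum
  have hcount := mul_sum_eq_two_mul_card_filter_sub_card hf ha
  obtain ⟨m, hm⟩ := hs
  rw [hsum, hm] at hcount
  omega

end SignedSums

namespace Multigraph

section Orientation

variable {V E : Type} (G : Multigraph V E) (D : E → Bool)

lemma tail_ne_head (e : E) : G.tail D e ≠ G.head D e := by
  cases h : D e <;> simp [tail, head, h, G.no_loop e, (G.no_loop e).symm]

lemma incident_iff_tail_or_head (v : V) (e : E) :
    G.Incident v e ↔ G.tail D e = v ∨ G.head D e = v := by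
  cases h : D e <;> simp [Incident, tail, head, h, or_comm]

variable [DecidableEq V]

/-- The sign of the edge `e` at the vertex `v` in the orientation `D`: `1` if `e` leaves `v`, `-1`
if `e` enters `v`, and `0` if `e` is not incident with `v`. -/
def edgeSign (v : V) (e : E) : ℤ :=
  (if G.tail D e = v then 1 else 0) - (if G.head D e = v then 1 else 0)

lemma edgeSign_reverse (v : V) (e : E) :
    G.edgeSign (fun e => !D e) v e = -G.edgeSign D v e := by
  cases h : D e <;> simp [edgeSign, tail, head, h]

lemma edgeSign_snd (e : E) : G.edgeSign D (G.snd e) e = -G.edgeSign D (G.fst e) e := by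
  cases h : D e <;> simp [edgeSign, tail, head, h, G.no_loop e, (G.no_loop e).symm]

variable {G D} {D' : E → Bool} {v : V} {e : E}

lemma edgeSign_eq_zero (he : ¬ G.Incident v e) : G.edgeSign D v e = 0 := by
  rw [G.incident_iff_tail_or_head D, not_or] at he
  simp [edgeSign, he]

lemma edgeSign_eq_one_or_neg_one (he : G.Incident v e) :
    G.edgeSign D v e = 1 ∨ G.edgeSign D v e = -1 := by
  rcases (G.incident_iff_tail_or_head D v e).1 he with rfl | rfl
  · simp [edgeSign, (G.tail_ne_head D e).symm]
  · simp [edgeSign, G.tail_ne_head D e]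

lemma eq_of_edgeSign_eq (he : G.Incident v e) (h : G.edgeSign D v e = G.edgeSign D' v e) :
    D e = D' e := by
  have hne := G.no_loop e
  rcases he with rfl | rfl <;> cases hD : D e <;> cases hD' : D' e <;>
    simp [edgeSign, tail, head, hD, hD', hne, hne.symm] at h ⊢

end Orientation

section NetOutDegree

variable {V E : Type} [DecidableEq V] [Fintype E] (G : Multigraph V E) (D : E → Bool)

/-- The net outdegree `d⁺_D(v) - d⁻_D(v)`. -/
def netOutDeg (v : V) : ℤ := G.outDeg D v - G.inDeg D v

lemma isMod3Orientation_iff : G.IsMod3Orientation D ↔ ∀ v, (3 : ℤ) ∣ G.netOutDeg D v :=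
  forall_congr' fun _ => ZMod.intCast_zmod_eq_zero_iff_dvd _ 3

lemma netOutDeg_eq_sum_edgeSign (v : V) : G.netOutDeg D v = ∑ e, G.edgeSign D v e := by
  simp [netOutDeg, outDeg, inDeg, edgeSign, sum_sub_distrib]

lemma netOutDeg_eq_sum_incident (v : V) :
    G.netOutDeg D v = ∑ e with G.Incident v e, G.edgeSign D v e := by
  rw [netOutDeg_eq_sum_edgeSign, sum_filter_of_ne]
  exact fun e _ he => by_contra fun hinc => he (edgeSign_eq_zero hinc)

lemma sum_netOutDeg (A : Finset V) :
    ∑ v ∈ A, G.netOutDeg D v =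
      ∑ e, ((if G.tail D e ∈ A then 1 else 0) - (if G.head D e ∈ A then 1 else 0)) := by
  simp only [netOutDeg_eq_sum_edgeSign]
  rw [sum_comm]
  simp [edgeSign, sum_sub_distrib]

lemma sum_univ_netOutDeg [Fintype V] : ∑ v, G.netOutDeg D v = 0 := by
  simp [sum_netOutDeg]

variable {G D}

lemma IsMod3Orientation.reverse (hD : G.IsMod3Orientation D) :
    G.IsMod3Orientation fun e => !D e := by
  rw [isMod3Orientation_iff] at hD ⊢
  intro v
  simpa only [netOutDeg_eq_sum_edgeSign, edgeSign_reverse, sum_neg_distrib, dvd_neg] using hD v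

end NetOutDegree

section MinorityEdge

variable {V E : Type} [DecidableEq V] {G : Multigraph V E} {D D₀ : E → Bool} {v : V} {e : E}

variable (G D v e) in
/-- In the orientation `D`, the edge `e` at `v` leaves `v` while all other edges at `v` enter it,
or the other way round. -/
def IsMinorityEdge : Prop :=
  G.Incident v e ∧ ∀ f, G.Incident v f → f ≠ e → G.edgeSign D v f = -G.edgeSign D v e

lemma IsMinorityEdge.edgeSign_congr (hD : G.IsMinorityEdge D v e) (hD₀ : G.IsMinorityEdge D₀ v e)
    (h : G.edgeSign D v e = G.edgeSign D₀ v e) {f : E} (hf : G.Incident v f) :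
    G.edgeSign D v f = G.edgeSign D₀ v f := by
  by_cases hfe : f = e
  · rw [hfe, h]
  · rw [hD.2 f hf hfe, hD₀.2 f hf hfe, h]

lemma IsMinorityEdge.reverse (hD : G.IsMinorityEdge D v e) :
    G.IsMinorityEdge (fun e => !D e) v e :=
  ⟨hD.1, fun f hf hfe => by simp only [edgeSign_reverse, hD.2 f hf hfe]⟩

variable [Fintype E]

lemma IsMod3Orientation.exists_extension (hD : G.IsMod3Orientation D)
    (hDe : G.IsMinorityEdge D v e) (hD₀e : G.IsMinorityEdge D₀ v e) :
    ∃ D', (∀ f, G.Incident v f → D' f = D₀ f) ∧ G.IsMod3Orientation D' := by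
  by_cases h : G.edgeSign D v e = G.edgeSign D₀ v e
  · exact ⟨D, fun f hf => eq_of_edgeSign_eq hf (hDe.edgeSign_congr hD₀e h hf), hD⟩
  · have hrev : G.edgeSign (fun e => !D e) v e = G.edgeSign D₀ v e := by
      rw [edgeSign_reverse]
      rcases edgeSign_eq_one_or_neg_one (D := D) hDe.1 with h₁ | h₁ <;>
        rcases edgeSign_eq_one_or_neg_one (D := D₀) hDe.1 with h₂ | h₂ <;> simp_all
    exact ⟨_, fun f hf => eq_of_edgeSign_eq hf (hDe.reverse.edgeSign_congr hD₀e hrev hf),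
      hD.reverse⟩

lemma netOutDeg_eq_or_isMinorityEdge (hv : G.degree v = 5) (hnet : (3 : ℤ) ∣ G.netOutDeg D v)
    (he : G.Incident v e) :
    G.netOutDeg D v = 3 * G.edgeSign D v e ∨ G.IsMinorityEdge D v e := by
  have hsign : ∀ f ∈ ({f | G.Incident v f} : Finset E),
      G.edgeSign D v f = 1 ∨ G.edgeSign D v f = -1 :=
    fun f hf => edgeSign_eq_one_or_neg_one (mem_filter_univ f |>.1 hf)
  have he' : e ∈ ({f | G.Incident v f} : Finset E) := (mem_filter_univ e).2 he
  set S : Finset E := {f ∈ {f | G.Incident v f} | G.edgeSign D v f = G.edgeSign D v e} with hS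
  have heS : e ∈ S := mem_filter.2 ⟨he', rfl⟩
  have hcount : G.edgeSign D v e * G.netOutDeg D v = 2 * #S - 5 := by
    rw [netOutDeg_eq_sum_incident, mul_sum_eq_two_mul_card_filter_sub_card hsign he', ← hS,
      ← degree, hv, Nat.cast_ofNat]
  have hle : #S ≤ 5 := (card_filter_le _ _).trans hv.le
  have hpos : 0 < #S := card_pos.2 ⟨e, heS⟩
  obtain hS1 | hS4 : #S = 1 ∨ #S = 4 := by
    have := hnet.mul_left (G.edgeSign D v e)
    omega
  · refine .inr ⟨he, fun f hf hfe => ?_⟩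
    have hfS : G.edgeSign D v f ≠ G.edgeSign D v e := fun h =>
      hfe (card_le_one.1 hS1.le f (mem_filter.2 ⟨(mem_filter_univ f).2 hf, h⟩) e heS)
    have := hsign f ((mem_filter_univ f).2 hf)
    have := hsign e he'
    omega
  · left
    rcases hsign e he' with h | h <;> rw [h] at hcount ⊢ <;> omega

lemma exists_isMinorityEdge (hv : G.degree v = 5) (hnet : (3 : ℤ) ∣ G.netOutDeg D v) :
    ∃ e, G.IsMinorityEdge D v e := by
  by_contra! hnone
  have hthree : ∀ e ∈ ({e | G.Incident v e} : Finset E),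
      G.netOutDeg D v = 3 * G.edgeSign D v e := fun e he =>
    (netOutDeg_eq_or_isMinorityEdge hv hnet ((mem_filter_univ e).1 he)).resolve_right (hnone e)
  have hfive : 5 * G.netOutDeg D v = 3 * G.netOutDeg D v := by
    have := sum_congr rfl hthree
    rwa [sum_const, ← degree, hv, ← mul_sum, ← netOutDeg_eq_sum_incident, nsmul_eq_mul] at this
  obtain ⟨e, he⟩ : ({e | G.Incident v e} : Finset E).Nonempty :=
    card_pos.1 (by rw [← degree, hv]; norm_num)
  have hsign := edgeSign_eq_one_or_neg_one (D := D) ((mem_filter_univ e).1 he)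
  have := hthree e he
  omega

end MinorityEdge

section Cut

variable {V E : Type} [DecidableEq V] [Fintype E] (G : Multigraph V E)

lemma mem_cut {A : Finset V} {e : E} : e ∈ G.cut A ↔ ¬ (G.fst e ∈ A ↔ G.snd e ∈ A) :=
  mem_filter_univ e

lemma degree_eq_card_cut_singleton (v : V) : G.degree v = #(G.cut {v}) := by
  refine congrArg card (filter_congr fun e _ => ?_)
  have hne := G.no_loop e
  simp only [Incident, mem_singleton]
  grind

lemma cut_compl [Fintype V] (A : Finset V) : G.cut Aᶜ = G.cut A := by
  ext e
  simp only [mem_cut, mem_compl, not_iff_not]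

lemma card_cut_union_add_card_cut_inter_le (A B : Finset V) :
    #(G.cut (A ∪ B)) + #(G.cut (A ∩ B)) ≤ #(G.cut A) + #(G.cut B) := by
  simp only [cut, card_filter, ← sum_add_distrib, mem_union, mem_inter]
  refine sum_le_sum fun e _ => ?_
  by_cases G.fst e ∈ A <;> by_cases G.fst e ∈ B <;> by_cases G.snd e ∈ A <;>
    by_cases G.snd e ∈ B <;> simp [*]

end Cut

/-- `G'` arises from `G` by identifying the vertices in each fiber of `vert` and deleting the loops
this creates. The fibers may be disconnected, and an edge of `G'` may have its two ends stored in
the opposite order to the corresponding edge of `G`. -/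
structure Contraction {V E V' E' : Type} (G : Multigraph V E) (G' : Multigraph V' E') where
  vert : V → V'
  edge : E' ↪ E
  ends : ∀ e, s(vert (G.fst (edge e)), vert (G.snd (edge e))) = s(G'.fst e, G'.snd e)
  collapsed : ∀ e ∉ Set.range edge, vert (G.fst e) = vert (G.snd e)

namespace Contraction

variable {V E V' E' : Type} {G : Multigraph V E} {G' : Multigraph V' E'} (c : Contraction G G')
  (D : E → Bool)

lemma vert_tail_eq_vert_head {e : E} (he : e ∉ Set.range c.edge) :
    c.vert (G.tail D e) = c.vert (G.head D e) := by
  have := c.collapsed e he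
  cases h : D e <;> simp [tail, head, h, this]

variable [DecidableEq V']

lemma card_cut_preimage [Fintype V] [DecidableEq V] [Fintype E] [Fintype E'] (A : Finset V') :
    #(G.cut {v | c.vert v ∈ A}) = #(G'.cut A) := by
  have hmap : G.cut {v | c.vert v ∈ A} = (G'.cut A).map c.edge := by
    ext e
    simp only [mem_map, mem_cut, mem_filter_univ]
    by_cases he : e ∈ Set.range c.edge
    · obtain ⟨e, rfl⟩ := he
      rcases Sym2.eq_iff.1 (c.ends e) with ⟨h₁, h₂⟩ | ⟨h₁, h₂⟩ <;>
        simp [h₁, h₂, iff_comm]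
    · simpa [c.collapsed e he] using fun e' _ h => he ⟨e', h⟩
  rw [hmap, card_map]

/-- The orientation of `G'` induced by an orientation `D` of `G`. -/
def orient (e : E') : Bool := decide (c.vert (G.tail D (c.edge e)) = G'.fst e)

lemma tail_orient (e : E') : G'.tail (c.orient D) e = c.vert (G.tail D (c.edge e)) := by
  have hne := (G'.no_loop e).symm
  rcases Sym2.eq_iff.1 (c.ends e) with ⟨h₁, h₂⟩ | ⟨h₁, h₂⟩ <;>
    cases h : D (c.edge e) <;> simp [tail, orient, h, h₁, h₂, hne]

lemma head_orient (e : E') : G'.head (c.orient D) e = c.vert (G.head D (c.edge e)) := by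
  have hne := (G'.no_loop e).symm
  rcases Sym2.eq_iff.1 (c.ends e) with ⟨h₁, h₂⟩ | ⟨h₁, h₂⟩ <;>
    cases h : D (c.edge e) <;> simp [tail, head, orient, h, h₁, h₂, hne]

variable [DecidableEq V] [Fintype E] [Fintype E']

lemma netOutDeg_orient [Fintype V] (v' : V') :
    G'.netOutDeg (c.orient D) v' = ∑ v with c.vert v = v', G.netOutDeg D v := by
  simp only [netOutDeg_eq_sum_edgeSign G', sum_netOutDeg, mem_filter_univ]
  refine Fintype.sum_of_injective c.edge c.edge.injective _ _ (fun e he => ?_) fun e => ?_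
  · rw [c.vert_tail_eq_vert_head D he, sub_self]
  · rw [edgeSign, tail_orient, head_orient]

variable {D} in
lemma isMod3Orientation_orient [Finite V] (hD : G.IsMod3Orientation D) :
    G'.IsMod3Orientation (c.orient D) := by
  cases nonempty_fintype V
  rw [isMod3Orientation_iff] at hD ⊢
  intro v'
  rw [netOutDeg_orient]
  exact dvd_sum fun v _ => hD v

end Contraction

section OtherEnd

variable {V E : Type} [DecidableEq V] (G : Multigraph V E) (x : V) {e : E}

/-- The end of `e` other than `x`; this is a junk value when `e` is not incident with `x`. -/
def otherEnd (e : E) : {v : V // v ≠ x} :=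
  if h : G.fst e = x then ⟨G.snd e, h ▸ (G.no_loop e).symm⟩ else ⟨G.fst e, h⟩

variable {G x} in
lemma mk_otherEnd (he : G.Incident x e) : s((G.otherEnd x e : V), x) = s(G.fst e, G.snd e) := by
  rcases he with rfl | rfl
  · simp [otherEnd, Sym2.eq_swap]
  · simp [otherEnd, G.no_loop e]

end OtherEnd

section Substitution

variable {U F V E : Type} [DecidableEq V] (H : Multigraph U F) (G : Multigraph V E) (x : V)
  (σ : ∀ u, {f // H.Incident u f} ≃ {e // G.Incident x e})

/-- Replace every vertex `u` of `H` by a copy of `G - x`, attaching each edge `f` at `u` to the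
vertex of that copy which is joined to `x` by the edge `σ u f` of `G`. -/
def substitute : Multigraph (U × {v // v ≠ x}) ((U × {e // ¬ G.Incident x e}) ⊕ F) where
  fst := Sum.elim (fun q => (q.1, ⟨G.fst q.2, fun h => q.2.2 (.inl h)⟩))
    fun f => (H.fst f, G.otherEnd x (σ _ ⟨f, .inl rfl⟩))
  snd := Sum.elim (fun q => (q.1, ⟨G.snd q.2, fun h => q.2.2 (.inr h)⟩))
    fun f => (H.snd f, G.otherEnd x (σ _ ⟨f, .inr rfl⟩))
  no_loop := by
    rintro (q | f) h
    · simp [G.no_loop] at h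
    · exact H.no_loop f (congrArg Prod.fst h)

/-- Contracting every copy of `G - x` to a single vertex recovers `H`. -/
def substituteToBase : Contraction (H.substitute G x σ) H where
  vert := Prod.fst
  edge := .inr
  ends _ := rfl
  collapsed := by
    rintro (q | f) he
    · rfl
    · exact absurd ⟨f, rfl⟩ he

/-- The edges of `G` viewed as edges of `H.substitute G x σ`, those not incident with `x` being
placed in the copy of `G - x` at `u`. -/
def copyEdge (u : U) : E ↪ (U × {e // ¬ G.Incident x e}) ⊕ F where
  toFun e := if he : G.Incident x e then .inr ((σ u).symm ⟨e, he⟩) else .inl (u, ⟨e, he⟩)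
  inj' e e' h := by
    dsimp only at h
    split_ifs at h
    · simpa [Subtype.coe_inj] using h
    · simpa using h

lemma copyEdge_apply (u : U) (f : {f // H.Incident u f}) :
    H.copyEdge G x σ u (σ u f) = .inr ↑f :=
  (dif_pos (σ u f).2).trans (by simp)

lemma copyEdge_of_not_incident (u : U) {e : E} (he : ¬ G.Incident x e) :
    H.copyEdge G x σ u e = .inl (u, ⟨e, he⟩) :=
  dif_neg he

variable [DecidableEq U]

/-- Contracting everything outside the copy at `u` to the single vertex `x` recovers `G`. -/
def substituteToCopy (u : U) : Contraction (H.substitute G x σ) G where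
  vert p := if p.1 = u then p.2 else x
  edge := H.copyEdge G x σ u
  ends e := by
    by_cases he : G.Incident x e
    · obtain ⟨⟨f, hf⟩, hσ⟩ := (σ u).surjective ⟨e, he⟩
      obtain rfl : (σ u ⟨f, hf⟩ : E) = e := congrArg Subtype.val hσ
      rw [copyEdge_apply, ← mk_otherEnd he]
      rcases hf with rfl | rfl
      · simp [substitute, (H.no_loop f).symm]
      · simp [substitute, H.no_loop f, Sym2.eq_swap]
    · simp [copyEdge_of_not_incident _ _ _ _ _ he, substitute]
  collapsed := by
    rintro (⟨u', e, he⟩ | f) hrange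
    · have hu : u' ≠ u := fun hu => hrange ⟨e, hu ▸ copyEdge_of_not_incident H G x σ u he⟩
      simp [substitute, hu]
    · have hf : ¬ H.Incident u f := fun hf => hrange ⟨_, copyEdge_apply H G x σ u ⟨f, hf⟩⟩
      rw [Incident, not_or] at hf
      simp [substitute, hf]

lemma substituteToCopy_edge (u : U) (f : {f // H.Incident u f}) :
    (H.substituteToCopy G x σ u).edge (σ u f) = (H.substituteToBase G x σ).edge f :=
  copyEdge_apply H G x σ u f

lemma substituteToCopy_vert_eq_iff (u : U) (p : U × {v // v ≠ x}) :
    (H.substituteToCopy G x σ u).vert p = x ↔ (H.substituteToBase G x σ).vert p ≠ u := by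
  by_cases h : p.1 = u <;> simp [substituteToCopy, substituteToBase, h, p.2.2]

/-- The sign flips because an edge of `H` leaving `u` enters the vertex `x` onto which the rest of
the graph is contracted. -/
lemma edgeSign_orient_substituteToCopy (D : (U × {e // ¬ G.Incident x e}) ⊕ F → Bool) (u : U)
    (f : {f // H.Incident u f}) :
    G.edgeSign ((H.substituteToCopy G x σ u).orient D) x (σ u f) =
      -H.edgeSign ((H.substituteToBase G x σ).orient D) u f := by
  simp only [edgeSign, Contraction.tail_orient, Contraction.head_orient,
    substituteToCopy_vert_eq_iff, substituteToCopy_edge]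
  split_ifs <;> simp_all

variable {H G x σ} in
lemma IsMinorityEdge.orient_substituteToCopy {D : (U × {e // ¬ G.Incident x e}) ⊕ F → Bool} {u : U}
    {f : {f // H.Incident u f}}
    (hf : H.IsMinorityEdge ((H.substituteToBase G x σ).orient D) u f) :
    G.IsMinorityEdge ((H.substituteToCopy G x σ u).orient D) x (σ u f) := by
  refine ⟨(σ u f).2, fun e he hne => ?_⟩
  obtain ⟨f', hσ⟩ := (σ u).surjective ⟨e, he⟩
  obtain rfl : (σ u f' : E) = e := congrArg Subtype.val hσ
  have hf' : (f' : F) ≠ f := fun h => hne (by rw [Subtype.ext h])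
  rw [edgeSign_orient_substituteToCopy, edgeSign_orient_substituteToCopy, hf.2 f' f'.2 hf']

end Substitution

section IncidentEquiv

variable {U F V E : Type} [DecidableEq U] [Fintype F] [DecidableEq V] [Fintype E]
  {H : Multigraph U F} {G : Multigraph V E} {x : V}

lemma exists_incident_equiv_apply_eq (hdeg : ∀ u, H.degree u = G.degree x)
    (f : ∀ u, {f // H.Incident u f}) (e : {e // G.Incident x e}) :
    ∃ σ : ∀ u, {f // H.Incident u f} ≃ {e // G.Incident x e}, ∀ u, σ u (f u) = e := by
  classical
  have hcard (u) : Fintype.card {f // H.Incident u f} = Fintype.card {e // G.Incident x e} := by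
    rw [Fintype.card_subtype, Fintype.card_subtype]
    exact hdeg u
  let τ (u) := Fintype.equivOfCardEq (hcard u)
  exact ⟨fun u => (τ u).trans (Equiv.swap (τ u (f u)) e), fun u => by simp⟩

end IncidentEquiv

section SubstitutionEdgeConnected

variable {U F V E : Type} [Fintype U] [DecidableEq U] [Fintype F] [Fintype V] [DecidableEq V]
  [Fintype E] {H : Multigraph U F} {G : Multigraph V E} {x : V} {k : ℕ}
  (σ : ∀ u, {f // H.Incident u f} ≃ {e // G.Incident x e})

lemma card_cut_substitute_blocks (I : Finset U) :
    #((H.substitute G x σ).cut {p | p.1 ∈ I}) = #(H.cut I) :=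
  (H.substituteToBase G x σ).card_cut_preimage I

lemma card_cut_substitute_block (u : U) :
    #((H.substitute G x σ).cut {p | p.1 = u}) = G.degree x := by
  have hblock := card_cut_substitute_blocks σ {u}
  simp only [mem_singleton] at hblock
  rw [hblock, ← degree_eq_card_cut_singleton, degree, degree, ← Fintype.card_subtype,
    ← Fintype.card_subtype, Fintype.card_congr (σ u)]

lemma EdgeConnected.le_card_cut_substitute_of_subset_block (hG : G.EdgeConnected k) {u : U}
    {A : Finset (U × {v // v ≠ x})} (hA : A.Nonempty) (hu : ∀ p ∈ A, p.1 = u) :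
    k ≤ #((H.substitute G x σ).cut A) := by
  let c := H.substituteToCopy G x σ u
  have hx : x ∉ A.image c.vert := by
    rw [mem_image]
    rintro ⟨p, hp, hpx⟩
    exact (substituteToCopy_vert_eq_iff H G x σ u p).1 hpx (hu p hp)
  have hpre : ({p | c.vert p ∈ A.image c.vert} : Finset (U × {v // v ≠ x})) = A := by
    ext p
    rw [mem_filter_univ, mem_image]
    refine ⟨?_, fun hp => ⟨p, hp, rfl⟩⟩
    rintro ⟨q, hq, hqp⟩
    have hqu : q.1 = u := hu q hq
    have hpu : p.1 = u := by_contra fun h => (substituteToCopy_vert_eq_iff H G x σ u q).1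
      (hqp.trans ((substituteToCopy_vert_eq_iff H G x σ u p).2 h)) hqu
    have : q.2 = p.2 := by simpa [c, substituteToCopy, hqu, hpu, Subtype.coe_inj] using hqp
    rwa [← Prod.ext (hqu.trans hpu.symm) this]
  rw [← hpre, c.card_cut_preimage]
  exact hG _ (hA.image _) fun h => hx (h ▸ mem_univ x)

/-- Uncrossing a cut with the cut around a copy of `G - x`, which has size at most `k`. -/
lemma EdgeConnected.card_cut_substitute_union_blocks_le (hG : G.EdgeConnected k)
    (hx : G.degree x ≤ k) (A : Finset (U × {v // v ≠ x})) {I : Finset U}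
    (hI : I ⊆ A.image Prod.fst) :
    #((H.substitute G x σ).cut (A ∪ ({p | p.1 ∈ I} : Finset _))) ≤
      #((H.substitute G x σ).cut A) := by
  induction I using Finset.induction_on with
  | empty => simp
  | insert u I _ ih =>
    obtain ⟨hu, hIA⟩ := insert_subset_iff.1 hI
    obtain ⟨p, hp, rfl⟩ := mem_image.1 hu
    set B : Finset (U × {v // v ≠ x}) := A ∪ ({q | q.1 ∈ I} : Finset _)
    set Q : Finset (U × {v // v ≠ x}) := {q | q.1 = p.1}
    have hunion : A ∪ ({q | q.1 ∈ insert p.1 I} : Finset _) = B ∪ Q := by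
      ext q
      simp only [B, Q, mem_union, mem_filter_univ, mem_insert]
      tauto
    have hinter : k ≤ #((H.substitute G x σ).cut (B ∩ Q)) :=
      hG.le_card_cut_substitute_of_subset_block σ (u := p.1)
        ⟨p, by simp [B, Q, hp]⟩ fun q hq => (mem_filter_univ q).1 (mem_inter.1 hq).2
    have hQ : #((H.substitute G x σ).cut Q) = G.degree x := card_cut_substitute_block σ p.1
    have hsub := card_cut_union_add_card_cut_inter_le (H.substitute G x σ) B Q
    have := ih hIA
    rw [hunion]
    omega

lemma EdgeConnected.substitute (hH : H.EdgeConnected k) (hG : G.EdgeConnected k)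
    (hx : G.degree x ≤ k) : (H.substitute G x σ).EdgeConnected k := by
  intro A hA hAuniv
  by_cases hfst : A.image Prod.fst = univ
  · obtain ⟨p, hp⟩ : ∃ p, p ∉ A := by simpa [eq_univ_iff_forall] using hAuniv
    set B := A ∪ ({q | q.1 ∈ univ.erase p.1} : Finset _) with hB
    have hcompl : k ≤ #((H.substitute G x σ).cut Bᶜ) :=
      hG.le_card_cut_substitute_of_subset_block σ (u := p.1) ⟨p, by simp [hB, hp]⟩
        fun q hq => by simp_all
    rw [cut_compl] at hcompl
    exact hcompl.trans
      (hG.card_cut_substitute_union_blocks_le σ hx A (hfst ▸ erase_subset _ _))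
  · have hfill := hG.card_cut_substitute_union_blocks_le σ hx A subset_rfl
    rw [union_eq_right.2 fun p hp => (mem_filter_univ p).2 (mem_image_of_mem _ hp),
      card_cut_substitute_blocks] at hfill
    exact (hH _ (hA.image _) hfst).trans hfill

end SubstitutionEdgeConnected

section CompleteGraph

/-- The complete graph on a linearly ordered vertex set, each edge being stored from its smaller to
its larger end. -/
def completeGraph (ι : Type) [LinearOrder ι] : Multigraph ι {p : ι × ι // p.1 < p.2} where
  fst p := p.1.1
  snd p := p.1.2
  no_loop p := p.2.ne

section

variable (ι : Type) [LinearOrder ι] [Fintype ι]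

lemma card_cut_completeGraph (A : Finset ι) : #((completeGraph ι).cut A) = #A * #Aᶜ := by
  rw [← card_product]
  refine card_nbij (fun p => if p.1.1 ∈ A then p.1 else p.1.swap) ?_ ?_ ?_
  · intro p hp
    simp only [mem_coe, mem_cut, completeGraph, mem_product, mem_compl] at hp ⊢
    split_ifs with h <;> simp_all
  · rintro ⟨⟨a, b⟩, hab⟩ hp ⟨⟨a', b'⟩, hab'⟩ hp' h
    simp only [mem_coe, mem_cut, completeGraph] at hp hp' h
    grind
  · rintro ⟨a, b⟩ hab
    simp only [mem_coe, mem_product, mem_compl] at hab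
    rcases lt_trichotomy a b with h | rfl | h
    · exact ⟨⟨(a, b), h⟩, by simp [mem_cut, completeGraph, hab], by simp [hab]⟩
    · exact absurd hab.1 hab.2
    · exact ⟨⟨(b, a), h⟩, by simp [mem_cut, completeGraph, hab], by simp [hab]⟩

lemma degree_completeGraph (v : ι) : (completeGraph ι).degree v = Fintype.card ι - 1 := by
  rw [degree_eq_card_cut_singleton, card_cut_completeGraph, card_compl, card_singleton, one_mul]

lemma edgeConnected_completeGraph : (completeGraph ι).EdgeConnected (Fintype.card ι - 1) := by
  intro A hA hAuniv
  have hA' : 0 < #A := hA.card_pos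
  have hAc : 0 < #Aᶜ := card_pos.2 (nonempty_iff_ne_empty.2 (compl_eq_empty_iff A |>.not.2 hAuniv))
  rw [card_cut_completeGraph, ← card_add_card_compl A]
  exact Nat.add_sub_one_le_mul hA'.ne' hAc.ne'

end

variable {n : ℕ}

/-- The edge of the complete graph on `Fin (n + 1)` between `0` and `j + 1`. -/
def spoke (j : Fin n) : {p : Fin (n + 1) × Fin (n + 1) // p.1 < p.2} := ⟨(0, j.succ), j.succ_pos⟩

lemma netOutDeg_completeGraph_zero (D : {p : Fin (n + 1) × Fin (n + 1) // p.1 < p.2} → Bool) :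
    (completeGraph (Fin (n + 1))).netOutDeg D 0 =
      -∑ j : Fin n, (completeGraph (Fin (n + 1))).edgeSign D j.succ (spoke j) := by
  rw [netOutDeg_eq_sum_edgeSign, ← sum_neg_distrib]
  refine (Fintype.sum_of_injective spoke ?_ _ _ ?_ ?_).symm
  · intro i j h
    simpa [spoke] using h
  · rintro ⟨⟨u, v⟩, huv⟩ hrange
    refine edgeSign_eq_zero ?_
    rintro (rfl | rfl)
    · obtain ⟨j, rfl⟩ := Fin.exists_succ_eq.2 huv.ne'
      exact hrange ⟨j, rfl⟩
    · exact (Fin.not_lt_zero _ huv).elim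
  · intro j
    rw [neg_eq_iff_eq_neg]
    exact edgeSign_snd _ D (spoke j)

/-- Otherwise summing the net outdegrees over all vertices would make a sum of `n` signs vanish. -/
lemma exists_netOutDeg_completeGraph_ne (hn : Odd n) {c : ℤ} (hc : c ≠ 1)
    (D : {p : Fin (n + 1) × Fin (n + 1) // p.1 < p.2} → Bool) :
    ∃ j : Fin n, (completeGraph (Fin (n + 1))).netOutDeg D j.succ ≠
      c * (completeGraph (Fin (n + 1))).edgeSign D j.succ (spoke j) := by
  by_contra! h
  have hsum := sum_univ_netOutDeg (completeGraph (Fin (n + 1))) D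
  rw [Fin.sum_univ_succ, netOutDeg_completeGraph_zero, sum_congr rfl fun j _ => h j, ← mul_sum,
    neg_add_eq_sub, ← sub_one_mul, mul_eq_zero, sub_eq_zero] at hsum
  exact sum_ne_zero_of_odd_card (fun j _ => edgeSign_eq_one_or_neg_one (.inr rfl)) (by simpa)
    (hsum.resolve_left hc)

end CompleteGraph

/-- If every 5-edge-connected graph admits a mod 3-orientation, then every
5-edge-connected graph is mod-3-extendable at every vertex of degree 5. -/
theorem stmt_13
    (hyp : ∀ (V E : Type) [Fintype V] [DecidableEq V] [Fintype E] [DecidableEq E] (G : Multigraph V E),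
      G.EdgeConnected 5 → G.Mod3Orientable)
    {V E : Type} [Fintype V] [DecidableEq V] [Fintype E] [DecidableEq E] (G : Multigraph V E) (x : V)
    (h5 : G.EdgeConnected 5) (hx : G.degree x = 5) :
    G.Mod3ExtendableAt x := by
  intro D₀ hD₀
  obtain ⟨e₀, he₀⟩ := exists_isMinorityEdge hx ((ZMod.intCast_zmod_eq_zero_iff_dvd _ 3).1 hD₀)
  let K := completeGraph (Fin 6)
  have hK (u) : K.degree u = 5 := degree_completeGraph _ u
  obtain ⟨σ, hσ⟩ := exists_incident_equiv_apply_eq (H := K) (fun u => (hK u).trans hx.symm)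
    (Fin.cases ⟨spoke 0, .inl rfl⟩ fun j => ⟨spoke j, .inr rfl⟩) ⟨e₀, he₀.1⟩
  obtain ⟨D, hD⟩ :=
    hyp _ _ (K.substitute G x σ) ((edgeConnected_completeGraph (Fin 6)).substitute σ h5 hx.le)
  let DK := (K.substituteToBase G x σ).orient D
  have hDK : K.IsMod3Orientation DK := Contraction.isMod3Orientation_orient _ hD
  obtain ⟨j, hj⟩ := exists_netOutDeg_completeGraph_ne (by decide) (by decide : (3 : ℤ) ≠ 1) DK
  have hspoke : K.IsMinorityEdge DK j.succ (spoke j) :=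
    (netOutDeg_eq_or_isMinorityEdge (hK _) ((isMod3Orientation_iff K DK).1 hDK _)
      (.inr rfl)).resolve_left hj
  have hcopy : G.IsMinorityEdge ((K.substituteToCopy G x σ j.succ).orient D) x e₀ := by
    have hwire : (σ j.succ ⟨spoke j, .inr rfl⟩ : E) = e₀ := congrArg Subtype.val (hσ j.succ)
    rw [← hwire]
    exact IsMinorityEdge.orient_substituteToCopy hspoke
  exact (Contraction.isMod3Orientation_orient _ hD).exists_extension hcopy he₀

end Multigraph
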